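/- Let f : 𝒮 → ℝ and define the additive distributional preference by S ≿ S' iff Σ_{s ∈ S} f(s) ≥ Σ_{s ∈ S'} f(s). Then ≿ satisfies the upper-bound property, the maximizer property, and the improvement property. -/

import Mathlib

open Finset

variable {α : Type*}

/-- Strict part of a distributional preference. -/
def strictPref (pref : Finset α → Finset α → Prop) (A B : Finset α) : Prop :=
  pref A B ∧ ¬ pref B A

/-- Indifference part of a distributional preference. -/
def indiffPref (pref : Finset α → Finset α → Prop) (A B : Finset α) : Prop :=
  pref A B ∧ pref B A

/-- Incomparability under a distributional preference. -/
def incomparable (pref : Finset α → Finset α → Prop) (A B : Finset α) : Prop :=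
  ¬ pref A B ∧ ¬ pref B A

/-- `NW q S` is the collection of non-wasteful subsets of `S`. -/
def NW (q : ℕ) (S : Finset α) : Set (Finset α) :=
  {T | T ⊆ S ∧ T.card = min q S.card}

/-- The frontier of `S`: non-wasteful subsets undominated w.r.t. the preference. -/
def frontierSet (pref : Finset α → Finset α → Prop) (q : ℕ) (S : Finset α) :
    Set (Finset α) :=
  {T | T ∈ NW q S ∧ ∀ T' ∈ NW q S, ¬ strictPref pref T' T}

/-- The upper-bound property of a distributional preference. -/
def upperBoundProperty [DecidableEq α] (pref : Finset α → Finset α → Prop) (q : ℕ) : Prop :=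
  ∀ S S' : Finset α, S.card = q → S'.card = q → incomparable pref S S' →
    ∃ S'' ∈ NW q (S ∪ S'), strictPref pref S'' S ∨ strictPref pref S'' S'

/-- The maximizer property of a distributional preference. -/
def maximizerProperty [DecidableEq α] (pref : Finset α → Finset α → Prop) (q : ℕ) : Prop :=
  ∀ S S' : Finset α, S ≠ S' → S.card = q → S'.card = q →
    (∀ S'' ∈ NW q (S ∪ S'), pref S S'' ∧ pref S' S'') →
    ∃ s ∈ S \ S', ∃ s' ∈ S' \ S,
      indiffPref pref (S.erase s ∪ {s'}) S ∧ indiffPref pref (S'.erase s' ∪ {s}) S'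

/-- The improvement property of a distributional preference. -/
def improvementProperty [DecidableEq α] (pref : Finset α → Finset α → Prop) (q : ℕ) : Prop :=
  ∀ S S' : Finset α, S.card = q → S'.card = q → ∀ s ∈ S \ S',
    (∀ S'' ∈ NW q (S ∪ S'), s ∉ S'' → strictPref pref S S'') →
    (∀ S'' ∈ NW q (S ∪ S'), s ∈ S'' → pref S S'') →
    ∃ s' ∈ S' \ S, strictPref pref (S'.erase s' ∪ {s}) S'

/-- A choice rule is non-wasteful. -/
def nonWasteful (q : ℕ) (Ch : Finset α → Finset α) : Prop :=
  ∀ S : Finset α, (Ch S).card = min q S.card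

/-- A choice rule promotes the distributional preference. -/
def promotesPref (pref : Finset α → Finset α → Prop) (Ch : Finset α → Finset α) : Prop :=
  ∀ S : Finset α, ∀ S' ⊆ S, S'.card = (Ch S).card → ¬ strictPref pref S' (Ch S)

/-- A choice rule guarantees no justified envy with respect to priority ranking `π`. -/
def noJustifiedEnvy [DecidableEq α] (pref : Finset α → Finset α → Prop)
    (π : α → α → Prop) (Ch : Finset α → Finset α) : Prop :=
  ∀ S : Finset α, ∀ s ∈ Ch S, ∀ s' ∈ S \ Ch S,
    pref ((Ch S).erase s ∪ {s'}) (Ch S) → π s s'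

/-- Path independence of a choice rule. -/
def pathIndependent [DecidableEq α] (Ch : Finset α → Finset α) : Prop :=
  ∀ S S' : Finset α, Ch (S ∪ S') = Ch (Ch S ∪ S')

/-- Consistency of a choice rule. -/
def consistentRule [DecidableEq α] (Ch : Finset α → Finset α) : Prop :=
  ∀ S : Finset α, ∀ s ∈ S, s ∉ Ch S → Ch (S.erase s) = Ch S

/-- Substitutability of a choice rule. -/
def substitutableRule [DecidableEq α] (Ch : Finset α → Finset α) : Prop :=
  ∀ S : Finset α, ∀ s ∈ S, ∀ s' ∈ S, s ≠ s' → s ∈ Ch S → s ∈ Ch (S.erase s')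

/-- `l` lists the elements of `A` in strictly decreasing `π`-priority. -/
def descList [DecidableEq α] (π : α → α → Prop) (A : Finset α) (l : List α) : Prop :=
  l.Pairwise π ∧ l.Nodup ∧ l.toFinset = A

/-- `A` priority dominates `B` with respect to `π`. -/
def priorityDominates [DecidableEq α] (π : α → α → Prop) (A B : Finset α) : Prop :=
  B.card ≤ A.card ∧
  ∀ la lb : List α, descList π A la → descList π B lb →
    ∀ (k : ℕ) (ha : k < la.length) (hb : k < lb.length),
      la.get ⟨k, ha⟩ = lb.get ⟨k, hb⟩ ∨ π (la.get ⟨k, ha⟩) (lb.get ⟨k, hb⟩)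

/-- The revealed preference axiom for a choice rule: no revealed-priority cycles. -/
def revealedPrefAxiom [DecidableEq α] (pref : Finset α → Finset α → Prop)
    (Ch : Finset α → Finset α) : Prop :=
  ¬ ∃ (K : ℕ) (s : ℕ → α) (T : ℕ → Finset α), 0 < K ∧ s K = s 0 ∧
    ∀ k < K, s k ∈ Ch (T k) ∧ s (k + 1) ∈ T k \ Ch (T k) ∧
      pref ((Ch (T k)).erase (s k) ∪ {s (k + 1)}) (Ch (T k))

/-- The value sum of a swap. -/
theorem sum_swap_aux {α : Type*} [DecidableEq α] (f : α → ℝ) (S : Finset α) (s t : α)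
    (hs : s ∈ S) (ht : t ∉ S) :
    ∑ x ∈ S.erase s ∪ {t}, f x = (∑ x ∈ S, f x) - f s + f t := by
  have hd : Disjoint (S.erase s) {t} := by
    simp [ht]
  rw [Finset.sum_union hd, Finset.sum_singleton, ← Finset.sum_erase_add S f hs]
  ring

/-- A swap is non-wasteful. -/
theorem swap_mem_NW_aux {α : Type*} [DecidableEq α] (q : ℕ) (S U : Finset α) (s t : α)
    (hs : s ∈ S) (ht : t ∉ S) (hc : S.card = q) (hSU : S ⊆ U) (htU : t ∈ U) :
    S.erase s ∪ {t} ∈ NW q U := by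
  have hd : Disjoint (S.erase s) {t} := by
    simp [ht]
  refine ⟨?_, ?_⟩
  · exact Finset.union_subset ((Finset.erase_subset _ _).trans hSU)
      (Finset.singleton_subset_iff.2 htU)
  · rw [Finset.card_union_of_disjoint hd, Finset.card_erase_of_mem hs, Finset.card_singleton]
    have h1 := Finset.card_le_card hSU
    have h2 := Finset.card_pos.2 ⟨s, hs⟩
    omega

/-- Distinct sets of equal size: the difference is nonempty. -/
theorem sdiff_exists_aux {α : Type*} [DecidableEq α] (S T : Finset α)
    (hne : S ≠ T) (hc : S.card = T.card) : ∃ s, s ∈ S \ T := by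
  by_contra h
  have : S ⊆ T := by
    intro x hx
    by_contra hxT
    exact h ⟨x, Finset.mem_sdiff.2 ⟨hx, hxT⟩⟩
  exact hne (Finset.eq_of_subset_of_card_le this hc.ge)

/-- The additive distributional preference induced by a value
function `f` satisfies the upper-bound, maximizer, and improvement
properties. -/
theorem stmt12 {α : Type*} [Fintype α] [Nonempty α] [DecidableEq α]
    (q : ℕ) (hq : 0 < q) (f : α → ℝ) :
    upperBoundProperty (fun A B : Finset α => (∑ s ∈ B, f s) ≤ ∑ s ∈ A, f s) q ∧
    maximizerProperty (fun A B : Finset α => (∑ s ∈ B, f s) ≤ ∑ s ∈ A, f s) q ∧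
    improvementProperty (fun A B : Finset α => (∑ s ∈ B, f s) ≤ ∑ s ∈ A, f s) q := by
  refine ⟨?_, ?_, ?_⟩
  · intro S S' _ _ h
    exact absurd (le_of_not_ge h.1) (fun hh => h.2 hh)
  · intro S S' hne hc hc' h
    obtain ⟨s, hs⟩ := sdiff_exists_aux S S' hne (hc.trans hc'.symm)
    obtain ⟨t, ht⟩ := sdiff_exists_aux S' S hne.symm (hc'.trans hc.symm)
    refine ⟨s, hs, t, ht, ?_⟩
    rw [Finset.mem_sdiff] at hs ht
    have h1 := (h _ (swap_mem_NW_aux q S (S ∪ S') s t hs.1 ht.2 hc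
      Finset.subset_union_left (Finset.mem_union_right _ ht.1))).1
    have h2 := (h _ (swap_mem_NW_aux q S' (S ∪ S') t s ht.1 hs.2 hc'
      Finset.subset_union_right (Finset.mem_union_left _ hs.1))).2
    simp only [indiffPref, sum_swap_aux f S s t hs.1 ht.2,
      sum_swap_aux f S' t s ht.1 hs.2] at h1 h2 ⊢
    refine ⟨⟨?_, ?_⟩, ?_, ?_⟩ <;> linarith
  · intro S S' hc hc' s hs h _
    have hne : S' ≠ S := by
      rintro rfl
      simp at hs
    obtain ⟨t, ht⟩ := sdiff_exists_aux S' S hne (hc'.trans hc.symm)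
    refine ⟨t, ht, ?_⟩
    rw [Finset.mem_sdiff] at hs ht
    have hst : s ≠ t := fun e => ht.2 (e ▸ hs.1)
    have h1 := h _ (swap_mem_NW_aux q S (S ∪ S') s t hs.1 ht.2 hc
      Finset.subset_union_left (Finset.mem_union_right _ ht.1)) (by simp [hst])
    simp only [strictPref, sum_swap_aux f S s t hs.1 ht.2,
      sum_swap_aux f S' t s ht.1 hs.2, not_le] at h1 ⊢
    constructor <;> linarith [h1.2]
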